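/- Characterization of entire local minimizers: fix α>0, β>0 and M ∈ ℝ, and let H = (1/2)(6α/(βM²))^{1/3} and V = MH (with the canonical (H,V)-staircase identically 0 when M=0). Then the set of entire local minimizers of the functional JF(α,β,Mx,·,·) coincides with the set Obl(H,V) of oblique translations of the canonical (H,V)-staircase; in particular, when M=0 the unique entire local minimizer is the zero function. -/

import Mathlib

/-!
Let `M ≠ 0`, `γ = βM²` and `s = x - u(x)/M`. The choice of `H` amounts to `α = (4/3)γH³`, and
`γH²` is the least energy per unit length of a staircase.

Optimal staircases are minimizers by calibration. Let `cal H` be `s³/3 - H²s` frozen outside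
`[-H,H]`. Along a flat piece `∫ (s² - H²)` is at least the increment of `cal H` (`cal_sub_le`), and
at a jump `cal H` changes by at most `(4/3)H³`, the price of a jump (`abs_cal_le`). Summing over
the pieces, the energy of any step function on `(a,b)` is at least `γH²(b - a)` plus `γ` times a
difference of boundary terms (`le_JF`). The staircase attains equality, since its `s` runs from
`-H` to `H` on every step (`JF_stair`); hence `stair_isMin`.

Conversely, let `v` be an entire local minimizer. Pasting an optimal staircase into `v` bounds the
energy of `v` on `(a,b)` by `γH²(b - a) + 3α` (`energy_le`), while a long interval without jumps
has cubically growing energy; so jumps recur in both directions (`exists_jump`). Replacing the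
value on one step shows that it is `M` times the midpoint of the step (`value`), and redistributing
two neighbouring steps shows that they have equal length (`equal`). Thus `v` is a uniform staircase
with some step length `d`, and the energy bound forces `(d - 2H)²(d + 4H) ≤ 0`, that is `d = 2H`
(`eq_stair`).

When `M = 0`, pasting the zero function shows that the energy of `v` is at most `2α` on every
interval. So `v` has finitely many jumps and vanishes near infinity, and then comparison with zero
on a large interval excludes all jumps (`min_zero`).
-/

open MeasureTheory Filter Set

namespace PeronaMalik

/-- `a_{δ,*} = δ⌊a/δ⌋`, the lower `δ`-approximation of `a`. -/
noncomputable def lowGrid (δ a : ℝ) : ℝ := δ * (⌊a / δ⌋ : ℤ)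

/-- `b_δ^* = δ⌈b/δ⌉`, the upper `δ`-approximation of `b`. -/
noncomputable def highGrid (δ b : ℝ) : ℝ := δ * (⌈b / δ⌉ : ℤ)

/-- `u` is piecewise constant at scale `δ`: constant on every interval `[zδ, (z+1)δ)`. -/
def IsPC (δ : ℝ) (u : ℝ → ℝ) : Prop :=
  ∀ z : ℤ, ∀ x ∈ Set.Ico ((z : ℝ) * δ) (((z : ℝ) + 1) * δ), u x = u ((z : ℝ) * δ)

/-- Discrete derivative `D^δ u (x) = (u(x+δ) - u(x))/δ`. -/
noncomputable def Dd (δ : ℝ) (u : ℝ → ℝ) (x : ℝ) : ℝ := (u (x + δ) - u x) / δ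

/-- The discrete Perona–Malik functional with fidelity term on `(a,b)`. -/
noncomputable def DPMF (n : ℕ) (β : ℝ) (f : ℝ → ℝ) (a b : ℝ) (u : ℝ → ℝ) : ℝ :=
  (∫ x in lowGrid (1 / (n : ℝ)) a..(highGrid (1 / (n : ℝ)) b - 1 / (n : ℝ)),
      Real.log (1 + (Dd (1 / (n : ℝ)) u x) ^ 2)) +
    β * ∫ x in a..b, (u x - f x) ^ 2

/-- `u` is a minimizer of `DPMF n β f (0,1)` over `PC_{1/n}(0,1)`. -/
def IsMinimizer (n : ℕ) (β : ℝ) (f : ℝ → ℝ) (u : ℝ → ℝ) : Prop :=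
  IsPC (1 / (n : ℝ)) u ∧
    ∀ v : ℝ → ℝ, IsPC (1 / (n : ℝ)) v → DPMF n β f 0 1 u ≤ DPMF n β f 0 1 v

/-- `m(n,β,f)`, the minimum value of the discrete Perona–Malik functional. -/
noncomputable def mval (n : ℕ) (β : ℝ) (f : ℝ → ℝ) : ℝ :=
  sInf ((fun u => DPMF n β f 0 1 u) '' {u | IsPC (1 / (n : ℝ)) u})

/-- `ω(n) = (log n / n)^{1/3}`. -/
noncomputable def omg (n : ℕ) : ℝ := (Real.log n / n) ^ ((1 : ℝ) / 3)

/-- `δ(n) = 1/(n ω(n))`. -/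
noncomputable def dlt (n : ℕ) : ℝ := 1 / ((n : ℝ) * omg n)

/-- The rescaled discrete Perona–Malik functional. -/
noncomputable def RDPM (n : ℕ) (a b : ℝ) (u : ℝ → ℝ) : ℝ :=
  (1 / omg n ^ 2) *
    ∫ x in lowGrid (dlt n) a..(highGrid (dlt n) b - dlt n),
      Real.log (1 + (Dd (dlt n) u x) ^ 2)

/-- The rescaled discrete Perona–Malik functional with fidelity term. -/
noncomputable def RDPMF (n : ℕ) (β : ℝ) (f : ℝ → ℝ) (a b : ℝ) (u : ℝ → ℝ) : ℝ :=
  RDPM n a b u + β * ∫ x in Set.Ioo a b, (u x - f x) ^ 2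

/-- `u` is a step function with finitely many jumps on `(a,b)`. -/
def IsStep (a b : ℝ) (u : ℝ → ℝ) : Prop :=
  ∃ (s : Finset ℝ) (c : ℝ) (J : ℝ → ℝ),
    (∀ p ∈ s, p ∈ Set.Ioo a b ∧ J p ≠ 0) ∧
    ∀ x ∈ Set.Ioo a b, u x = c + ∑ p ∈ s, (if p ≤ x then J p else 0)

/-- The set of jump (discontinuity) points of `u` inside `(a,b)`. -/
def jumpSet (a b : ℝ) (u : ℝ → ℝ) : Set ℝ :=
  {x ∈ Set.Ioo a b | ¬ ContinuousAt u x}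

/-- The limit functional `JF(α,β,f,(a,b),u) = α·#jumps + β∫(u-f)²`. -/
noncomputable def JF (α β : ℝ) (f : ℝ → ℝ) (a b : ℝ) (u : ℝ → ℝ) : ℝ :=
  α * ((jumpSet a b u).ncard : ℝ) + β * ∫ x in Set.Ioo a b, (u x - f x) ^ 2

/-- Strict convergence in `BV((a,b))`: `L¹` convergence plus convergence of
total variations. -/
def StrictBV (useq : ℕ → ℝ → ℝ) (u : ℝ → ℝ) (a b : ℝ) : Prop :=
  Tendsto (fun k => ∫ x in Set.Ioo a b, |useq k x - u x|) atTop (nhds 0) ∧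
  Tendsto (fun k => eVariationOn (useq k) (Set.Ioo a b)) atTop
    (nhds (eVariationOn u (Set.Ioo a b)))

/-- Locally strict convergence in `BV_loc(ℝ)`: strict convergence on every bounded
interval whose endpoints are not jump points of the limit. -/
def LocStrictBV (useq : ℕ → ℝ → ℝ) (u : ℝ → ℝ) : Prop :=
  ∀ a b : ℝ, a < b → ContinuousAt u a → ContinuousAt u b → StrictBV useq u a b

/-- `S(x) = 2⌊(x+1)/2⌋`. -/
noncomputable def stairS (x : ℝ) : ℝ := 2 * (⌊(x + 1) / 2⌋ : ℤ)

/-- The canonical `(H,V)`-staircase `S_{H,V}(x) = V·S(x/H)`. -/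
noncomputable def canStair (H V : ℝ) (x : ℝ) : ℝ := V * stairS (x / H)

/-- Oblique translations of the canonical `(H,V)`-staircase. -/
def Obl (H V : ℝ) (v : ℝ → ℝ) : Prop :=
  ∃ τ ∈ Set.Icc (-1 : ℝ) 1, ∀ x, v x = canStair H V (x - H * τ) + V * τ

/-- Graph translations of horizontal type of the canonical `(H,V)`-staircase. -/
def Orz (H V : ℝ) (v : ℝ → ℝ) : Prop :=
  ∃ τ ∈ Set.Icc (-1 : ℝ) 1, ∀ x, v x = canStair H V (x - H * τ)

/-- `μ_n(β,L,M)`: minimum of the rescaled functional with affine forcing term. -/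
noncomputable def muDisc (n : ℕ) (β L M : ℝ) : ℝ :=
  sInf ((fun u => RDPMF n β (fun x => M * x) 0 L u) '' {u | IsPC (dlt n) u})

/-- `μ*_n(β,L,M)`: same as `μ_n` but with boundary conditions `u(0)=0`, `u(L^*)=ML`. -/
noncomputable def muDiscStar (n : ℕ) (β L M : ℝ) : ℝ :=
  sInf ((fun u => RDPMF n β (fun x => M * x) 0 L u) ''
    {u | IsPC (dlt n) u ∧ u 0 = 0 ∧ u (highGrid (dlt n) L - dlt n) = M * L})

/-- `μ(α,β,L,M)`: minimum of the limit functional with affine forcing term. -/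
noncomputable def muLim (α β L M : ℝ) : ℝ :=
  sInf ((fun u => JF α β (fun x => M * x) 0 L u) '' {u | IsStep 0 L u})

/-- `μ*(α,β,L,M)`: same as `μ` but with boundary values `u(0⁺)=0`, `u(L⁻)=ML`. -/
noncomputable def muLimStar (α β L M : ℝ) : ℝ :=
  sInf ((fun u => JF α β (fun x => M * x) 0 L u) ''
    {u | IsStep 0 L u ∧ Tendsto u (nhdsWithin 0 (Set.Ioi 0)) (nhds 0) ∧
         Tendsto u (nhdsWithin L (Set.Iio L)) (nhds (M * L))})

/-- `u` and `v` have the same boundary values `u(a⁺)=v(a⁺)`, `u(b⁻)=v(b⁻)`. -/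
def SameBdry (a b : ℝ) (u v : ℝ → ℝ) : Prop :=
  (∀ c : ℝ, Tendsto v (nhdsWithin a (Set.Ioi a)) (nhds c) →
     Tendsto u (nhdsWithin a (Set.Ioi a)) (nhds c)) ∧
  (∀ c : ℝ, Tendsto v (nhdsWithin b (Set.Iio b)) (nhds c) →
     Tendsto u (nhdsWithin b (Set.Iio b)) (nhds c))

/-- `v` is a local minimizer for `JF(α,β,f,(a,b),·)` among step functions with the
same boundary values. -/
def IsLocalMinJF (α β : ℝ) (f : ℝ → ℝ) (a b : ℝ) (v : ℝ → ℝ) : Prop :=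
  IsStep a b v ∧
  ∀ u : ℝ → ℝ, IsStep a b u → SameBdry a b u v → JF α β f a b v ≤ JF α β f a b u

/-- `v` is an entire local minimizer for `JF(α,β,f,·,·)`. -/
def IsEntireLocalMinJF (α β : ℝ) (f : ℝ → ℝ) (v : ℝ → ℝ) : Prop :=
  ∀ a b : ℝ, a < b → IsLocalMinJF α β f a b v

/-- `v` is a local minimizer for `RDPMF_n(β,f,(a,b),·)` among piecewise constant
functions with the same boundary values. -/
def IsLocalMinRDPMF (n : ℕ) (β : ℝ) (f : ℝ → ℝ) (a b : ℝ) (v : ℝ → ℝ) : Prop :=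
  IsPC (dlt n) v ∧
  ∀ u : ℝ → ℝ, IsPC (dlt n) u →
    u (lowGrid (dlt n) a) = v (lowGrid (dlt n) a) →
    u (highGrid (dlt n) b - dlt n) = v (highGrid (dlt n) b - dlt n) →
    RDPMF n β f a b v ≤ RDPMF n β f a b u

open scoped Classical in
/-- Jump indicator: `1` if `u` is discontinuous at `p`, `0` otherwise. -/
noncomputable def jmp (u : ℝ → ℝ) (p : ℝ) : ℝ := if ContinuousAt u p then 0 else 1

lemma jmp_nonneg (u : ℝ → ℝ) (p : ℝ) : 0 ≤ jmp u p := by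
  unfold jmp; split_ifs <;> norm_num

lemma jmp_le_one (u : ℝ → ℝ) (p : ℝ) : jmp u p ≤ 1 := by
  unfold jmp; split_ifs <;> norm_num

lemma jmp_of_not {u : ℝ → ℝ} {p : ℝ} (h : ¬ ContinuousAt u p) : jmp u p = 1 := by
  unfold jmp; rw [if_neg h]

/-! ### Step functions -/

/-- In the representation of a step function, trivial jumps and jump points outside `(a,b)`
are harmless. -/
lemma isStep_of {a b : ℝ} {u : ℝ → ℝ} (s : Finset ℝ) (c : ℝ) (J : ℝ → ℝ)
    (h : ∀ x ∈ Ioo a b, u x = c + ∑ p ∈ s, (if p ≤ x then J p else 0)) : IsStep a b u := by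
  classical
  refine ⟨s.filter (fun p => p ∈ Ioo a b ∧ J p ≠ 0), c + ∑ p ∈ s.filter (fun p => p ≤ a), J p,
    J, ?_, ?_⟩
  · intro p hp
    exact (Finset.mem_filter.1 hp).2
  · intro x hx
    rw [h x hx, add_assoc, Finset.sum_filter, Finset.sum_filter, ← Finset.sum_add_distrib]
    congr 1
    refine Finset.sum_congr rfl fun p _ => ?_
    obtain ⟨h1, h2⟩ := hx
    by_cases hpa : p ≤ a
    · have : p ≤ x := by linarith
      simp [hpa, this]
    · by_cases hpb : p < b
      · by_cases hJ : J p = 0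
        · simp [hJ]
        · have : a < p := by linarith
          simp [hpa, hpb, hJ, this]
      · have : ¬ p ≤ x := by intro; apply hpb; linarith
        simp [hpa, hpb, this]

lemma IsStep.mono {a b a' b' : ℝ} {u : ℝ → ℝ} (h : IsStep a b u) (ha : a ≤ a') (hb : b' ≤ b) :
    IsStep a' b' u := by
  obtain ⟨s, c, J, _, h2⟩ := h
  exact isStep_of s c J fun x hx => h2 x ⟨by linarith [hx.1], by linarith [hx.2]⟩

lemma IsStep.congr {a b : ℝ} {u v : ℝ → ℝ} (h : IsStep a b u) (he : ∀ x ∈ Ioo a b, v x = u x) :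
    IsStep a b v := by
  obtain ⟨s, c, J, _, h2⟩ := h
  exact isStep_of s c J fun x hx => by rw [he x hx, h2 x hx]

lemma isStep_const (a b c : ℝ) : IsStep a b (fun _ => c) :=
  isStep_of ∅ c 0 (by simp)

lemma isStep_single (a b p j : ℝ) : IsStep a b (fun x => if p ≤ x then j else 0) :=
  isStep_of {p} 0 (fun _ => j) (by simp)

lemma IsStep.add {a b : ℝ} {u v : ℝ → ℝ} (hu : IsStep a b u) (hv : IsStep a b v) :
    IsStep a b (fun x => u x + v x) := by
  classical
  obtain ⟨s, c, J, _, h⟩ := hu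
  obtain ⟨s', c', J', _, h'⟩ := hv
  refine isStep_of (s ∪ s') (c + c')
    (fun p => (if p ∈ s then J p else 0) + (if p ∈ s' then J' p else 0)) fun x hx => ?_
  have e1 : ∑ p ∈ s, (if p ≤ x then J p else 0)
      = ∑ p ∈ s ∪ s', (if p ∈ s then (if p ≤ x then J p else 0) else 0) := by
    rw [Finset.sum_ite_mem, Finset.union_inter_cancel_left]
  have e2 : ∑ p ∈ s', (if p ≤ x then J' p else 0)
      = ∑ p ∈ s ∪ s', (if p ∈ s' then (if p ≤ x then J' p else 0) else 0) := by
    rw [Finset.sum_ite_mem, Finset.union_inter_cancel_right]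
  rw [h x hx, h' x hx, e1, e2, add_add_add_comm, ← Finset.sum_add_distrib]
  congr 1
  refine Finset.sum_congr rfl fun p _ => ?_
  split_ifs <;> simp

lemma isStep_sum {ι : Type*} {a b : ℝ} (s : Finset ι) (u : ι → ℝ → ℝ)
    (h : ∀ i, IsStep a b (u i)) : IsStep a b (fun x => ∑ i ∈ s, u i x) := by
  classical
  induction s using Finset.induction_on with
  | empty => simpa using isStep_const a b 0
  | insert i s hi ih =>
    simp only [Finset.sum_insert hi]
    exact (h i).add ih

/-- Restricting a step function to `[q,∞)` (extended by `0`) and multiplying it by a constant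
gives a step function. -/
lemma IsStep.cut {a b : ℝ} {u : ℝ → ℝ} (hu : IsStep a b u) (k q : ℝ) :
    IsStep a b (fun x => if q ≤ x then k * u x else 0) := by
  obtain ⟨s, c, J, _, h⟩ := hu
  have := (isStep_single a b q (k * c)).add
    (isStep_sum (a := a) (b := b) s (fun p x => if max p q ≤ x then k * J p else 0)
      (fun p => isStep_single a b _ _))
  refine this.congr fun x hx => ?_
  simp only [h x hx, max_le_iff]
  by_cases hq : q ≤ x
  · simp only [hq, if_true, and_true, mul_add, Finset.mul_sum, mul_ite, mul_zero]
  · simp [hq]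

lemma IsStep.glue {a b : ℝ} {u v : ℝ → ℝ} (hu : IsStep a b u) (hv : IsStep a b v) (q : ℝ) :
    IsStep a b (fun x => if x < q then u x else v x) := by
  refine ((hu.add (hu.cut (-1) q)).add (hv.cut 1 q)).congr fun x _ => ?_
  by_cases h : x < q
  · simp [h, not_le.2 h]
  · simp [h, not_lt.1 h]

lemma ev_right (p x : ℝ) : ∀ᶠ y in nhdsWithin x (Ioi x), (p ≤ y ↔ p ≤ x) := by
  rcases le_or_gt p x with h | h
  · filter_upwards [self_mem_nhdsWithin] with y hy
    have : x < y := hy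
    constructor <;> intro <;> linarith
  · filter_upwards [mem_nhdsWithin_of_mem_nhds (Iio_mem_nhds h)] with y hy
    have : y < p := hy
    constructor <;> intro <;> linarith

lemma ev_left (p x : ℝ) : ∀ᶠ y in nhdsWithin x (Iio x), (p ≤ y ↔ p < x) := by
  rcases le_or_gt x p with h | h
  · filter_upwards [self_mem_nhdsWithin] with y hy
    have : y < x := hy
    constructor <;> intro <;> linarith
  · filter_upwards [mem_nhdsWithin_of_mem_nhds (Ioi_mem_nhds h)] with y hy
    have : p < y := hy
    exact ⟨fun _ => h, fun _ => this.le⟩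

lemma ev_nhds {p x : ℝ} (hp : p ≠ x) : ∀ᶠ y in nhds x, (p ≤ y ↔ p ≤ x) := by
  rcases lt_or_gt_of_ne hp with h | h
  · filter_upwards [Ioi_mem_nhds h] with y hy
    have : p < y := hy
    exact ⟨fun _ => h.le, fun _ => this.le⟩
  · filter_upwards [Iio_mem_nhds h] with y hy
    have : y < p := hy
    constructor <;> intro <;> linarith

lemma IsStep.right_const {a b : ℝ} {u : ℝ → ℝ} (h : IsStep a b u) {x : ℝ} (hx : x ∈ Ioo a b) :
    ∀ᶠ y in nhdsWithin x (Ioi x), u y = u x := by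
  obtain ⟨s, c, J, _, h⟩ := h
  filter_upwards [(eventually_all_finset s).2 fun p _ => ev_right p x,
    mem_nhdsWithin_of_mem_nhds (Ioo_mem_nhds hx.1 hx.2)] with y hy hy'
  rw [h y hy', h x hx]
  congr 1
  exact Finset.sum_congr rfl fun p hp => by simp only [hy p hp]

lemma IsStep.exists_right {a b : ℝ} {u : ℝ → ℝ} (h : IsStep a b u) (hab : a < b) :
    ∃ c, ∀ᶠ y in nhdsWithin a (Ioi a), u y = c := by
  obtain ⟨s, c, J, h1, h⟩ := h
  refine ⟨c, ?_⟩
  filter_upwards [(eventually_all_finset s).2 fun p _ => ev_right p a,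
    self_mem_nhdsWithin, mem_nhdsWithin_of_mem_nhds (Iio_mem_nhds hab)] with y hy hy1 hy2
  rw [h y ⟨hy1, hy2⟩]
  simp only [add_eq_left]
  refine Finset.sum_eq_zero fun p hp => ?_
  have := (h1 p hp).1.1
  simp [hy p hp, this]

/-- The support `s` in a reduced representation of a step function is its jump set. -/
lemma jumpSet_eq {a b : ℝ} {u : ℝ → ℝ} {s : Finset ℝ} {c : ℝ} {J : ℝ → ℝ}
    (h1 : ∀ p ∈ s, p ∈ Set.Ioo a b ∧ J p ≠ 0)
    (h : ∀ x ∈ Set.Ioo a b, u x = c + ∑ p ∈ s, (if p ≤ x then J p else 0)) :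
    jumpSet a b u = s := by
  ext x
  constructor
  · rintro ⟨hx, hc⟩
    by_contra hxs
    apply hc
    have : ∀ᶠ y in nhds x, u x = u y := by
      filter_upwards [(eventually_all_finset s).2 fun p hp =>
        ev_nhds (p := p) (x := x) (by rintro rfl; exact hxs hp), Ioo_mem_nhds hx.1 hx.2] with y hy hy'
      rw [h y hy', h x hx]
      congr 1
      exact Finset.sum_congr rfl fun p hp => by simp only [hy p hp]
    exact tendsto_const_nhds.congr' this
  · intro hxs
    obtain ⟨hx, hJ⟩ := h1 x hxs
    refine ⟨hx, fun hc => hJ ?_⟩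
    have e1 : ∀ᶠ y in nhdsWithin x (Iio x),
        c + ∑ p ∈ s, (if p < x then J p else 0) = u y := by
      filter_upwards [(eventually_all_finset s).2 fun p _ => ev_left p x,
        mem_nhdsWithin_of_mem_nhds (Ioo_mem_nhds hx.1 hx.2)] with y hy hy'
      rw [h y hy']
      congr 1
      exact Finset.sum_congr rfl fun p hp => by simp only [hy p hp]
    have e2 := tendsto_nhds_unique (tendsto_const_nhds.congr' e1)
      (hc.tendsto.mono_left nhdsWithin_le_nhds)
    rw [h x hx] at e2
    have e3 : ∑ p ∈ s, (if p ≤ x then J p else 0)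
        = ∑ p ∈ s, (if p < x then J p else 0) + J x := by
      have : J x = ∑ p ∈ s, (if p = x then J p else 0) := by simp [Finset.mem_coe.1 hxs]
      rw [this, ← Finset.sum_add_distrib]
      refine Finset.sum_congr rfl fun p _ => ?_
      rcases lt_trichotomy p x with hp | hp | hp
      · simp [hp, hp.le, hp.ne]
      · simp [hp]
      · simp [hp.not_ge, hp.not_gt, hp.ne']
    linarith

lemma IsStep.finite_jumpSet {a b : ℝ} {u : ℝ → ℝ} (h : IsStep a b u) :
    (jumpSet a b u).Finite := by
  obtain ⟨s, c, J, h1, h⟩ := h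
  rw [jumpSet_eq h1 h]
  exact s.finite_toSet

lemma IsStep.const_of_no_jump {a b : ℝ} {u : ℝ → ℝ} (h : IsStep a b u)
    (hj : ∀ x ∈ Ioo a b, ContinuousAt u x) : ∃ c, ∀ x ∈ Ioo a b, u x = c := by
  obtain ⟨s, c, J, h1, h⟩ := h
  have hs : s = ∅ := by
    have := jumpSet_eq h1 h
    rw [← Finset.coe_eq_empty, ← this, Set.eq_empty_iff_forall_notMem]
    rintro x ⟨hx, hc⟩
    exact hc (hj x hx)
  exact ⟨c, fun x hx => by rw [h x hx, hs]; simp⟩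

/-- Induction principle for step functions: the right end point of the interval moves from
jump to jump, and `P b c` records a property of `u` on `(a,b)` with left limit `c` at `b`. -/
lemma IsStep.induct {a : ℝ} {u : ℝ → ℝ} (P : ℝ → ℝ → Prop)
    (base : ∀ b c, a < b → (∀ x ∈ Ioo a b, u x = c) → P b c)
    (step : ∀ p b c c', a < p → p < b → IsStep a b u →
      (∀ᶠ x in nhdsWithin p (Iio p), u x = c) →
      (∀ x ∈ Ico p b, u x = c') → c ≠ c' → P p c → P b c')
    {b : ℝ} (hab : a < b) (h : IsStep a b u) :
    ∃ c, (∀ᶠ x in nhdsWithin b (Iio b), u x = c) ∧ P b c := by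
  obtain ⟨s, c, J, h1, h⟩ := h
  have left : ∀ (s : Finset ℝ) (b : ℝ), a < b → (∀ p ∈ s, p ∈ Ioo a b ∧ J p ≠ 0) →
      (∀ x ∈ Ioo a b, u x = c + ∑ p ∈ s, (if p ≤ x then J p else 0)) →
      ∀ᶠ x in nhdsWithin b (Iio b), u x = c + ∑ p ∈ s, J p := by
    intro s b hab h1 h
    filter_upwards [(eventually_all_finset s).2 fun p _ => ev_left p b,
      self_mem_nhdsWithin, mem_nhdsWithin_of_mem_nhds (Ioi_mem_nhds hab)] with x hx hx1 hx2
    rw [h x ⟨hx2, hx1⟩]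
    congr 1
    refine Finset.sum_congr rfl fun p hp => ?_
    have := (h1 p hp).1.2
    simp [hx p hp, this]
  refine ⟨c + ∑ p ∈ s, J p, left s b hab h1 h, ?_⟩
  induction s using Finset.induction_on_max generalizing b with
  | empty => exact base b _ hab fun x hx => by rw [h x hx]; simp
  | insert p s hp ih =>
    have hps : p ∉ s := fun hm => (hp p hm).false
    obtain ⟨⟨hap, hpb⟩, hJ⟩ := h1 p (Finset.mem_insert_self p s)
    have h1' : ∀ q ∈ s, q ∈ Ioo a p ∧ J q ≠ 0 := fun q hq =>
      have := h1 q (Finset.mem_insert_of_mem hq)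
      ⟨⟨this.1.1, hp q hq⟩, this.2⟩
    have h' : ∀ x ∈ Ioo a p, u x = c + ∑ q ∈ s, (if q ≤ x then J q else 0) := by
      intro x hx
      rw [h x ⟨hx.1, hx.2.trans hpb⟩, Finset.sum_insert hps, if_neg (not_le.2 hx.2), zero_add]
    refine step p b _ _ hap hpb (isStep_of _ c J h) (left s p hap h1' h') ?_ ?_ (ih hap h1' h')
    · intro x hx
      rw [h x ⟨hap.trans_le hx.1, hx.2⟩]
      congr 1
      refine Finset.sum_congr rfl fun q hq => ?_
      rw [if_pos]
      rcases Finset.mem_insert.1 hq with rfl | hq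
      · exact hx.1
      · exact (hp q hq).le.trans hx.1
    · rw [Finset.sum_insert hps]
      intro he
      apply hJ
      linarith

/-! ### The functional -/

lemma IsStep.integrable {a b : ℝ} {u : ℝ → ℝ} (h : IsStep a b u) (M : ℝ) :
    IntegrableOn (fun x => (u x - M * x) ^ 2) (Ioo a b) := by
  obtain ⟨s, c, J, _, h⟩ := h
  have hlin : MemLp (fun x : ℝ => c - M * x) 2 (volume.restrict (Ioo a b)) := by
    refine (memLp_two_iff_integrable_sq (by fun_prop)).2 ?_
    have : IntegrableOn (fun x : ℝ => (c - M * x) ^ 2) (Icc a b) :=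
      ContinuousOn.integrableOn_Icc (by fun_prop)
    exact this.mono_set Ioo_subset_Icc_self
  have hs : MemLp (fun x : ℝ => ∑ p ∈ s, (if p ≤ x then J p else 0)) 2
      (volume.restrict (Ioo a b)) := by
    refine memLp_finsetSum s fun p _ => ?_
    have : (fun x : ℝ => if p ≤ x then J p else 0) = (Ici p).indicator (fun _ => J p) := by
      ext x; simp [indicator]
    rw [this]
    exact (memLp_const (J p)).indicator measurableSet_Ici
  refine ((hlin.add hs).integrable_sq).congr ?_
  filter_upwards [ae_restrict_mem measurableSet_Ioo] with x hx
  simp only [Pi.add_apply, h x hx]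
  ring

lemma JF_congr {α β : ℝ} {f : ℝ → ℝ} {a b : ℝ} {u v : ℝ → ℝ} (h : ∀ x ∈ Ioo a b, u x = v x) :
    JF α β f a b u = JF α β f a b v := by
  have e1 : jumpSet a b u = jumpSet a b v := by
    ext x
    refine and_congr_right fun hx => not_congr ?_
    exact continuousAt_congr (by
      filter_upwards [Ioo_mem_nhds hx.1 hx.2] with y hy using h y hy)
  have e2 : ∫ x in Ioo a b, (u x - f x) ^ 2 = ∫ x in Ioo a b, (v x - f x) ^ 2 :=
    setIntegral_congr_fun measurableSet_Ioo fun x hx => by simp only [h x hx]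
  rw [JF, JF, e1, e2]

lemma JF_split {α β M a p b : ℝ} {u : ℝ → ℝ} (hap : a < p) (hpb : p < b) (h : IsStep a b u) :
    JF α β (fun x => M * x) a b u
      = JF α β (fun x => M * x) a p u + JF α β (fun x => M * x) p b u + α * jmp u p := by
  classical
  have hab := hap.trans hpb
  have hi : ∫ x in Ioo a b, (u x - M * x) ^ 2
      = (∫ x in Ioo a p, (u x - M * x) ^ 2) + ∫ x in Ioo p b, (u x - M * x) ^ 2 := by
    have hI := h.integrable M
    rw [← integral_Ioc_eq_integral_Ioo, ← integral_Ioc_eq_integral_Ioo,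
      ← integral_Ioc_eq_integral_Ioo, ← Ioc_union_Ioc_eq_Ioc hap.le hpb.le]
    rw [← integrableOn_Ioc_iff_integrableOn_Ioo] at hI
    refine setIntegral_union (Ioc_disjoint_Ioc_of_le le_rfl) measurableSet_Ioc
      (hI.mono_set (Ioc_subset_Ioc_right hpb.le)) (hI.mono_set (Ioc_subset_Ioc_left hap.le))
  have hf := h.finite_jumpSet
  have f1 : (jumpSet a p u).Finite := (h.mono le_rfl hpb.le).finite_jumpSet
  have f2 : (jumpSet p b u).Finite := (h.mono hap.le le_rfl).finite_jumpSet
  have hd : Disjoint (jumpSet a p u) (jumpSet p b u) := by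
    rw [Set.disjoint_left]
    rintro x ⟨hx, _⟩ ⟨hx', _⟩
    exact (hx.2.trans hx'.1).false
  have hn : ((jumpSet a b u).ncard : ℝ)
      = (jumpSet a p u).ncard + (jumpSet p b u).ncard + jmp u p := by
    by_cases hc : ContinuousAt u p
    · have : jumpSet a b u = jumpSet a p u ∪ jumpSet p b u := by
        ext x
        simp only [jumpSet, mem_union, mem_ofPred_eq, mem_Ioo]
        constructor
        · rintro ⟨⟨h1, h2⟩, h3⟩
          rcases lt_trichotomy x p with hx | rfl | hx
          · exact Or.inl ⟨⟨h1, hx⟩, h3⟩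
          · exact absurd hc h3
          · exact Or.inr ⟨⟨hx, h2⟩, h3⟩
        · rintro (⟨⟨h1, h2⟩, h3⟩ | ⟨⟨h1, h2⟩, h3⟩)
          · exact ⟨⟨h1, h2.trans hpb⟩, h3⟩
          · exact ⟨⟨hap.trans h1, h2⟩, h3⟩
      rw [this, Set.ncard_union_eq hd f1 f2, jmp, if_pos hc]
      push_cast; ring
    · have : jumpSet a b u = insert p (jumpSet a p u ∪ jumpSet p b u) := by
        ext x
        simp only [jumpSet, mem_union, mem_ofPred_eq, mem_Ioo, mem_insert_iff]
        constructor
        · rintro ⟨⟨h1, h2⟩, h3⟩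
          rcases lt_trichotomy x p with hx | rfl | hx
          · exact Or.inr (Or.inl ⟨⟨h1, hx⟩, h3⟩)
          · exact Or.inl rfl
          · exact Or.inr (Or.inr ⟨⟨hx, h2⟩, h3⟩)
        · rintro (rfl | ⟨⟨h1, h2⟩, h3⟩ | ⟨⟨h1, h2⟩, h3⟩)
          · exact ⟨⟨hap, hpb⟩, hc⟩
          · exact ⟨⟨h1, h2.trans hpb⟩, h3⟩
          · exact ⟨⟨hap.trans h1, h2⟩, h3⟩
      rw [this, Set.ncard_insert_of_notMem _ (f1.union f2), Set.ncard_union_eq hd f1 f2, jmp,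
        if_neg hc]
      · push_cast; ring
      · rintro (⟨hx, _⟩ | ⟨hx, _⟩)
        · exact hx.2.false
        · exact hx.1.false
  simp only [JF, hi, hn]
  ring

lemma JF_const {α β M a b c : ℝ} {u : ℝ → ℝ} (hab : a < b) (h : ∀ x ∈ Ioo a b, u x = c) :
    JF α β (fun x => M * x) a b u
      = β * (c ^ 2 * (b - a) - c * M * (b ^ 2 - a ^ 2) + M ^ 2 * (b ^ 3 - a ^ 3) / 3) := by
  rw [JF_congr (v := fun _ => c) h, JF]
  have e1 : jumpSet a b (fun _ => c) = ∅ := by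
    ext x
    simp [jumpSet, continuousAt_const]
  have e2 : ∫ x in Ioo a b, (c - M * x) ^ 2
      = c ^ 2 * (b - a) - c * M * (b ^ 2 - a ^ 2) + M ^ 2 * (b ^ 3 - a ^ 3) / 3 := by
    rw [← integral_Ioc_eq_integral_Ioo, ← intervalIntegral.integral_of_le hab.le]
    have hd : ∀ x ∈ uIcc a b, HasDerivAt
        (fun x => c ^ 2 * x - c * M * x ^ 2 + M ^ 2 * x ^ 3 / 3) ((c - M * x) ^ 2) x := by
      intro x _
      have := (((hasDerivAt_id' x).const_mul (c ^ 2)).sub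
        ((hasDerivAt_pow 2 x).const_mul (c * M))).add
        (((hasDerivAt_pow 3 x).const_mul (M ^ 2)).div_const 3)
      refine this.congr_deriv ?_
      push_cast
      ring
    rw [intervalIntegral.integral_eq_sub_of_hasDerivAt hd
      (Continuous.intervalIntegrable (by fun_prop) _ _)]
    ring
  simp only [e1, e2, Set.ncard_empty]
  simp

lemma ncard_le_JF {α β : ℝ} (hβ : 0 < β) (f : ℝ → ℝ) (a b : ℝ) (u : ℝ → ℝ) :
    α * ((jumpSet a b u).ncard : ℝ) ≤ JF α β f a b u := by
  have : 0 ≤ ∫ x in Ioo a b, (u x - f x) ^ 2 := integral_nonneg fun x => sq_nonneg _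
  rw [JF]
  nlinarith

/-- Cut-and-paste comparison: an entire local minimizer `v` is compared on `(p,q)` with any step
function that agrees with `v` off `[p,q)`, the possible jumps at `p` and `q` being charged. -/
lemma IsEntireLocalMinJF.compare {α β M : ℝ} {v : ℝ → ℝ}
    (hv : IsEntireLocalMinJF α β (fun x => M * x) v) {p q : ℝ} (hpq : p < q) {u : ℝ → ℝ}
    (hu : IsStep (p - 1) (q + 1) u) (h : ∀ x, x ∉ Ico p q → u x = v x) :
    JF α β (fun x => M * x) p q v + α * jmp v p + α * jmp v q
      ≤ JF α β (fun x => M * x) p q u + α * jmp u p + α * jmp u q := by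
  obtain ⟨hs, hm⟩ := hv (p - 1) (q + 1) (by linarith)
  have hb : SameBdry (p - 1) (q + 1) u v := by
    constructor
    · intro c hc
      refine hc.congr' ?_
      filter_upwards [mem_nhdsWithin_of_mem_nhds (Iio_mem_nhds (show p - 1 < p by linarith))]
        with x hx
      exact (h x fun hx' => absurd hx'.1 (not_le.2 hx)).symm
    · intro c hc
      refine hc.congr' ?_
      filter_upwards [mem_nhdsWithin_of_mem_nhds (Ioi_mem_nhds (show q < q + 1 by linarith))]
        with x hx
      exact (h x fun hx' => absurd hx'.2 (not_lt.2 (le_of_lt hx))).symm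
  have key := hm u hu hb
  have s1 : ∀ w, IsStep (p - 1) (q + 1) w → JF α β (fun x => M * x) (p - 1) (q + 1) w
      = JF α β (fun x => M * x) (p - 1) p w + JF α β (fun x => M * x) p q w
        + JF α β (fun x => M * x) q (q + 1) w + α * jmp w p + α * jmp w q := by
    intro w hw
    rw [JF_split (p := p) (by linarith) (by linarith) hw,
      JF_split (p := q) hpq (by linarith) (hw.mono (by linarith) le_rfl)]
    ring
  rw [s1 v hs, s1 u hu,
    JF_congr (a := p - 1) (b := p) fun x hx => h x fun hx' => absurd hx'.1 (not_le.2 hx.2),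
    JF_congr (a := q) (b := q + 1) fun x hx => h x fun hx' => absurd hx'.2 (not_lt.2 hx.1.le)]
    at key
  linarith

/-- The competitor equal to `w` on `[p,q)` and to `v` elsewhere. -/
noncomputable def paste (v w : ℝ → ℝ) (p q x : ℝ) : ℝ :=
  if x < p then v x else if x < q then w x else v x

lemma IsEntireLocalMinJF.paste_le {α β M : ℝ} {v : ℝ → ℝ}
    (hv : IsEntireLocalMinJF α β (fun x => M * x) v) {p q : ℝ} (hpq : p < q) {w : ℝ → ℝ}
    (hα : 0 < α) (hw : IsStep (p - 1) (q + 1) w) :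
    JF α β (fun x => M * x) p q v + α * jmp v p + α * jmp v q
      ≤ JF α β (fun x => M * x) p q w + 2 * α := by
  have hs := (hv (p - 1) (q + 1) (by linarith)).1
  have := hv.compare hpq (u := paste v w p q) (hs.glue (hw.glue hs q) p) (by
    intro x hx
    unfold paste
    split_ifs with h1 h2
    · rfl
    · exact absurd ⟨not_lt.1 h1, h2⟩ hx
    · rfl)
  rw [JF_congr (u := paste v w p q) (v := w)] at this
  · nlinarith [jmp_le_one (paste v w p q) p, jmp_le_one (paste v w p q) q]
  · intro x hx
    simp [paste, hx.1.le, hx.2]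

lemma IsEntireLocalMinJF.const_Ico {α β M : ℝ} {v : ℝ → ℝ}
    (hv : IsEntireLocalMinJF α β (fun x => M * x) v) {p q : ℝ} (hpq : p < q)
    (hj : ∀ x ∈ Ioo p q, ContinuousAt v x) : ∀ x ∈ Ico p q, v x = v p := by
  obtain ⟨c, hc⟩ := (hv p q hpq).1.const_of_no_jump hj
  have hp : v p = c := by
    have h1 := (hv (p - 1) q (by linarith)).1.right_const (x := p) ⟨by linarith, hpq⟩
    have h2 : ∀ᶠ y in nhdsWithin p (Ioi p), v y = c := by
      filter_upwards [Ioo_mem_nhdsGT hpq] with y hy using hc y hy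
    obtain ⟨y, hy1, hy2⟩ := (h1.and h2).exists
    rw [← hy1, hy2]
  intro x hx
  rcases hx.1.eq_or_lt with rfl | h
  · rfl
  · rw [hc x ⟨h, hx.2⟩, hp]

/-! ### Calibration -/

/-- The calibrating potential `s³/3 - H²s`, frozen outside `[-H,H]`; its derivative is
`min (s² - H²) 0`. -/
noncomputable def cal (H s : ℝ) : ℝ := (max (-H) (min H s)) ^ 3 / 3 - H ^ 2 * max (-H) (min H s)

lemma cal_of_mem {H s : ℝ} (h1 : -H ≤ s) (h2 : s ≤ H) : cal H s = s ^ 3 / 3 - H ^ 2 * s := by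
  rw [cal, min_eq_right h2, max_eq_right h1]

lemma abs_cal_le {H : ℝ} (hH : 0 < H) (s : ℝ) : |cal H s| ≤ 2 / 3 * H ^ 3 := by
  unfold cal
  set t := max (-H) (min H s)
  have h1 : -H ≤ t := le_max_left _ _
  have h2 : t ≤ H := max_le (by linarith) (min_le_left _ _)
  rw [abs_le]
  constructor
  · nlinarith [mul_nonneg (sq_nonneg (t - H)) (show 0 ≤ t + 2 * H by linarith)]
  · nlinarith [mul_nonneg (sq_nonneg (t + H)) (show 0 ≤ 2 * H - t by linarith)]

/-- The potential grows no faster than `∫ (s² - H²)`. -/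
lemma cal_sub_le {H s t : ℝ} (hH : 0 < H) (hst : s ≤ t) :
    cal H t - cal H s ≤ (t ^ 3 / 3 - H ^ 2 * t) - (s ^ 3 / 3 - H ^ 2 * s) := by
  -- `s³/3 - H²s - cal H s` in closed form, as a monotone function of `s`
  have key : ∀ r, r ^ 3 / 3 - H ^ 2 * r - cal H r
      = (max (r - H) 0) ^ 2 * (max (r - H) 0 + 3 * H) / 3
        - (max (-H - r) 0) ^ 2 * (max (-H - r) 0 + 3 * H) / 3 := by
    intro r
    unfold cal
    rcases le_total r (-H) with h | h
    · rw [min_eq_right (by linarith), max_eq_left h, max_eq_right (by linarith),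
        max_eq_left (by linarith)]
      ring
    · rcases le_total r H with h' | h'
      · rw [min_eq_right h', max_eq_right h, max_eq_right (by linarith),
          max_eq_right (by linarith)]
        ring
      · rw [min_eq_left h', max_eq_right (by linarith), max_eq_left (by linarith),
          max_eq_right (by linarith)]
        ring
  have m1 : max (s - H) 0 ≤ max (t - H) 0 := max_le_max (by linarith) le_rfl
  have m2 : max (-H - t) 0 ≤ max (-H - s) 0 := max_le_max (by linarith) le_rfl
  have n1 : (max (s - H) 0) ^ 2 * (max (s - H) 0 + 3 * H)
      ≤ (max (t - H) 0) ^ 2 * (max (t - H) 0 + 3 * H) := by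
    have := le_max_right (s - H) 0
    gcongr
  have n2 : (max (-H - t) 0) ^ 2 * (max (-H - t) 0 + 3 * H)
      ≤ (max (-H - s) 0) ^ 2 * (max (-H - s) 0 + 3 * H) := by
    have := le_max_right (-H - t) 0
    gcongr
  linarith [key s, key t]

lemma JF_const' {α β M H a b y : ℝ} {u : ℝ → ℝ} (hab : a < b) (h : ∀ x ∈ Ioo a b, u x = M * y) :
    JF α β (fun x => M * x) a b u
      = β * M ^ 2 * (H ^ 2 * (b - a) + (((b - y) ^ 3 / 3 - H ^ 2 * (b - y))
        - ((a - y) ^ 3 / 3 - H ^ 2 * (a - y)))) := by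
  rw [JF_const hab h]
  ring

lemma JF_step {α β M a p b c c' : ℝ} {u : ℝ → ℝ} (hap : a < p) (hpb : p < b) (h : IsStep a b u)
    (hc : ∀ᶠ x in nhdsWithin p (Iio p), u x = c) (hc' : ∀ x ∈ Ico p b, u x = c') (hne : c ≠ c') :
    JF α β (fun x => M * x) a b u
      = JF α β (fun x => M * x) a p u + JF α β (fun x => M * x) p b u + α := by
  rw [JF_split hap hpb h, jmp_of_not, mul_one]
  intro hcont
  apply hne
  have := tendsto_nhds_unique (tendsto_const_nhds.congr' (hc.mono fun x hx => hx.symm))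
    (hcont.tendsto.mono_left nhdsWithin_le_nhds)
  rw [this, hc' p ⟨le_rfl, hpb⟩]

lemma eq_of_right {a b c c0 : ℝ} {u : ℝ → ℝ} (hab : a < b)
    (h0 : ∀ᶠ x in nhdsWithin a (Ioi a), u x = c0) (h : ∀ x ∈ Ioo a b, u x = c) : c = c0 := by
  obtain ⟨x, h1, h2⟩ := (h0.and (Ioo_mem_nhdsGT hab)).exists
  rw [← h1, h x h2]

/-- Calibration lower bound for arbitrary step functions. -/
lemma le_JF {α β M H a b c0 : ℝ} {u : ℝ → ℝ} (hβ : 0 < β) (hM : M ≠ 0) (hH : 0 < H)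
    (hα : α = 4 / 3 * (β * M ^ 2) * H ^ 3) (hab : a < b) (h : IsStep a b u)
    (h0 : ∀ᶠ x in nhdsWithin a (Ioi a), u x = c0) :
    ∃ c1, (∀ᶠ x in nhdsWithin b (Iio b), u x = c1) ∧
      β * M ^ 2 * (H ^ 2 * (b - a) + (cal H (b - c1 / M) - cal H (a - c0 / M)))
        ≤ JF α β (fun x => M * x) a b u := by
  have hγ : 0 < β * M ^ 2 := by positivity
  have piece : ∀ p b c, p < b → (∀ x ∈ Ioo p b, u x = c) →
      β * M ^ 2 * (H ^ 2 * (b - p) + (cal H (b - c / M) - cal H (p - c / M)))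
        ≤ JF α β (fun x => M * x) p b u := by
    intro p b c hpb hc
    rw [JF_const' (H := H) (y := c / M) hpb fun x hx => by rw [hc x hx]; field_simp]
    refine mul_le_mul_of_nonneg_left ?_ hγ.le
    linarith [cal_sub_le hH (show p - c / M ≤ b - c / M by linarith)]
  refine h.induct (fun b c => β * M ^ 2 * (H ^ 2 * (b - a)
    + (cal H (b - c / M) - cal H (a - c0 / M))) ≤ JF α β (fun x => M * x) a b u) ?_ ?_ hab
  · intro b c hab hc
    rw [← eq_of_right hab h0 hc]
    exact piece a b c hab hc
  · intro p b c c' hap hpb hs hl hc' hne ih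
    rw [JF_step hap hpb hs hl hc' hne]
    have h1 := piece p b c' hpb fun x hx => hc' x ⟨hx.1.le, hx.2⟩
    have h2 : 0 ≤ β * M ^ 2 * (4 / 3 * H ^ 3 - (cal H (p - c' / M) - cal H (p - c / M))) := by
      refine mul_nonneg hγ.le ?_
      linarith [(abs_le.1 (abs_cal_le hH (p - c' / M))).2, (abs_le.1 (abs_cal_le hH (p - c / M))).1]
    rw [hα] at *
    linarith

/-! ### Staircases -/

/-- The staircase with jumps at `p + ℓℤ` whose value on each step is `M` times its midpoint. -/
noncomputable def stair (M p l x : ℝ) : ℝ := M * (p + l * (⌊(x - p) / l⌋ + 1 / 2))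

lemma isStep_stair (M p : ℝ) {l : ℝ} (hl : 0 < l) (a b : ℝ) : IsStep a b (stair M p l) := by
  set N : ℤ := ⌊(a - p) / l⌋
  set N' : ℤ := ⌊(b - p) / l⌋
  have := (isStep_const a b (M * (p + l * (N + 1 / 2)))).add
    (isStep_sum (a := a) (b := b) (Finset.Ioc N N')
      (fun k x => if p + l * k ≤ x then M * l else 0) (fun k => isStep_single a b _ _))
  refine this.congr fun x hx => ?_
  set n : ℤ := ⌊(x - p) / l⌋ with hn
  have h1 : N ≤ n := Int.floor_le_floor (by gcongr; exact hx.1.le)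
  have h2 : n ≤ N' := Int.floor_le_floor (by gcongr; exact hx.2.le)
  have e : ∀ k : ℤ, p + l * k ≤ x ↔ k ≤ n := by
    intro k
    rw [hn, Int.le_floor, le_div_iff₀ hl]
    constructor <;> intro <;> linarith
  have e2 : (Finset.Ioc N N').filter (fun k => k ≤ n) = Finset.Ioc N n := by
    ext k
    simp only [Finset.mem_filter, Finset.mem_Ioc]
    omega
  have e3 : ((n - N).toNat : ℝ) = n - N := by
    have : ((n - N).toNat : ℤ) = n - N := Int.toNat_of_nonneg (by omega)
    exact_mod_cast this
  simp only [e]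
  rw [← Finset.sum_filter, e2, Finset.sum_const, Int.card_Ioc, nsmul_eq_mul, e3]
  simp only [stair]
  ring

lemma stair_mem {M p H : ℝ} (hM : M ≠ 0) (hH : 0 < H) (x : ℝ) :
    -H ≤ x - stair M p (2 * H) x / M ∧ x - stair M p (2 * H) x / M < H := by
  have e : stair M p (2 * H) x / M = p + 2 * H * (⌊(x - p) / (2 * H)⌋ + 1 / 2) := by
    rw [stair]; field_simp
  have h1 := Int.floor_le ((x - p) / (2 * H))
  have h2 := Int.lt_floor_add_one ((x - p) / (2 * H))
  rw [le_div_iff₀ (by linarith)] at h1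
  rw [div_lt_iff₀ (by linarith)] at h2
  rw [e]
  constructor <;> linarith

/-- The optimal staircase attains equality in the calibration bound. -/
lemma JF_stair {α β M H a b c0 q : ℝ} (hM : M ≠ 0) (hH : 0 < H)
    (hα : α = 4 / 3 * (β * M ^ 2) * H ^ 3) (hab : a < b)
    (h0 : ∀ᶠ x in nhdsWithin a (Ioi a), stair M q (2 * H) x = c0) :
    ∃ c1, (∀ᶠ x in nhdsWithin b (Iio b), stair M q (2 * H) x = c1) ∧
      JF α β (fun x => M * x) a b (stair M q (2 * H)) =
      β * M ^ 2 * (H ^ 2 * (b - a) + (cal H (b - c1 / M) - cal H (a - c0 / M))) := by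
  have piece : ∀ p b c, p < b → (∀ x ∈ Ioo p b, stair M q (2 * H) x = c) →
      JF α β (fun x => M * x) p b (stair M q (2 * H)) =
      β * M ^ 2 * (H ^ 2 * (b - p) + (cal H (b - c / M) - cal H (p - c / M))) := by
    intro p b c hpb hc
    rw [JF_const' (H := H) (y := c / M) hpb fun x hx => by rw [hc x hx]; field_simp]
    have hx : ∀ x ∈ Ioo p b, x ∈ Icc (-H + c / M) (H + c / M) := by
      intro x hx
      have := stair_mem (p := q) hM hH x
      rw [hc x hx] at this
      exact ⟨by linarith, by linarith⟩
    have hcl : Icc p b ⊆ Icc (-H + c / M) (H + c / M) := by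
      rw [← closure_Ioo hpb.ne]
      exact closure_minimal hx isClosed_Icc
    have hp := hcl (left_mem_Icc.2 hpb.le)
    have hb := hcl (right_mem_Icc.2 hpb.le)
    rw [cal_of_mem (s := b - c / M) (by linarith [hb.1]) (by linarith [hb.2]),
      cal_of_mem (s := p - c / M) (by linarith [hp.1]) (by linarith [hp.2])]
  refine (isStep_stair M q (by linarith) a b).induct (fun b c =>
    JF α β (fun x => M * x) a b (stair M q (2 * H)) = β * M ^ 2 * (H ^ 2 * (b - a)
    + (cal H (b - c / M) - cal H (a - c0 / M)))) ?_ ?_ hab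
  · intro b c hab hc
    rw [← eq_of_right hab h0 hc]
    exact piece a b c hab hc
  · intro p b c c' hap hpb hs hl hc' hne ih
    rw [JF_step hap hpb hs hl hc' hne, ih,
      piece p b c' hpb fun x hx => hc' x ⟨hx.1.le, hx.2⟩]
    -- left and right values at a jump are `p - H` and `p + H` (times `M`)
    have hp' := stair_mem (p := q) hM hH p
    rw [hc' p ⟨le_rfl, hpb⟩] at hp'
    have hcp : p ∈ Icc (-H + c / M) (H + c / M) := by
      refine isClosed_Icc.mem_of_frequently_of_tendsto (b := nhdsWithin p (Iio p)) (f := id) ?_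
        (tendsto_id.mono_left nhdsWithin_le_nhds)
      refine Eventually.frequently ?_
      filter_upwards [hl] with x hx
      have := stair_mem (p := q) hM hH x
      rw [hx] at this
      exact ⟨by simp only [id]; linarith, by simp only [id]; linarith⟩
    obtain ⟨x, hx⟩ := hl.exists
    have hcx : ∃ n : ℤ, c' / M - c / M = 2 * H * n := by
      refine ⟨⌊(p - q) / (2 * H)⌋ - ⌊(x - q) / (2 * H)⌋, ?_⟩
      rw [← hc' p ⟨le_rfl, hpb⟩, ← hx]
      simp only [stair]
      field_simp
      push_cast
      ring
    obtain ⟨n, hn⟩ := hcx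
    have n0 : n ≠ 0 := by
      rintro rfl
      apply hne
      have : c' / M = c / M := by push_cast at hn; linarith
      field_simp at this
      exact this.symm
    have n1 : n < 2 := by
      have : (n : ℝ) < 2 := by nlinarith [hcp.2, hcp.1]
      exact_mod_cast this
    have n2 : -1 < n := by
      have : (-1 : ℝ) < n := by nlinarith [hcp.2, hcp.1]
      exact_mod_cast this
    have n3 : n = 1 := by omega
    rw [n3] at hn
    push_cast at hn
    have e1 : p - c / M = H := by linarith [hcp.2, hcp.1]
    have e2 : p - c' / M = -H := by linarith [hcp.2, hcp.1]
    rw [e1, e2, cal_of_mem (s := H) (by linarith) le_rfl,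
      cal_of_mem (s := -H) le_rfl (by linarith), hα]
    ring

/-- Optimal staircases are entire local minimizers. -/
lemma stair_isMin {α β M H q : ℝ} (hβ : 0 < β) (hM : M ≠ 0) (hH : 0 < H)
    (hα : α = 4 / 3 * (β * M ^ 2) * H ^ 3) :
    IsEntireLocalMinJF α β (fun x => M * x) (stair M q (2 * H)) := by
  intro a b hab
  have hs := isStep_stair M q (show 0 < 2 * H by linarith) a b
  refine ⟨hs, fun u hu hb => ?_⟩
  obtain ⟨c0, h0⟩ := hs.exists_right hab
  obtain ⟨c1, h1, hJ⟩ := JF_stair hM hH hα hab h0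
  obtain ⟨d0, k0⟩ := hu.exists_right hab
  obtain ⟨d1, k1, hlow⟩ := le_JF hβ hM hH hα hab hu k0
  have tend : ∀ {l : Filter ℝ} {w : ℝ → ℝ} {c : ℝ}, (∀ᶠ x in l, w x = c) →
      Tendsto w l (nhds c) := fun h =>
    tendsto_const_nhds.congr' (h.mono fun x hx => hx.symm)
  have e0 : d0 = c0 := tendsto_nhds_unique (tend k0) (hb.1 c0 (tend h0))
  have e1 : d1 = c1 := tendsto_nhds_unique (tend k1) (hb.2 c1 (tend h1))
  rw [hJ]
  rw [e0, e1] at hlow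
  exact hlow

/-! ### Rigidity of entire local minimizers -/

/-- `p < q` are consecutive jump points of `v`. -/
def Consec (v : ℝ → ℝ) (p q : ℝ) : Prop :=
  p < q ∧ ¬ ContinuousAt v p ∧ ¬ ContinuousAt v q ∧ ∀ x ∈ Ioo p q, ContinuousAt v x

/-- The energy per unit length of a minimizer is at most that of the optimal staircase. -/
lemma IsEntireLocalMinJF.energy_le {α β M H : ℝ} {v : ℝ → ℝ}
    (hv : IsEntireLocalMinJF α β (fun x => M * x) v) (hβ : 0 < β) (hM : M ≠ 0) (hH : 0 < H)
    (hα : α = 4 / 3 * (β * M ^ 2) * H ^ 3) {a b : ℝ} (hab : a < b) :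
    JF α β (fun x => M * x) a b v ≤ β * M ^ 2 * H ^ 2 * (b - a) + 3 * α := by
  have hγ : 0 < β * M ^ 2 := by positivity
  have hα0 : 0 < α := by rw [hα]; positivity
  have h1 := hv.paste_le hab hα0 (isStep_stair M 0 (show 0 < 2 * H by linarith) (a - 1) (b + 1))
  obtain ⟨c0, h0⟩ := (isStep_stair M 0 (show 0 < 2 * H by linarith) a b).exists_right hab
  obtain ⟨c1, -, hJ⟩ := JF_stair hM hH hα hab h0
  have h2 : 0 ≤ β * M ^ 2 * (4 / 3 * H ^ 3 - (cal H (b - c1 / M) - cal H (a - c0 / M))) := by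
    refine mul_nonneg hγ.le ?_
    linarith [(abs_le.1 (abs_cal_le hH (b - c1 / M))).2, (abs_le.1 (abs_cal_le hH (a - c0 / M))).1]
  rw [hJ] at h1
  nlinarith [mul_nonneg hα0.le (jmp_nonneg v a), mul_nonneg hα0.le (jmp_nonneg v b)]

lemma IsEntireLocalMinJF.exists_jump {α β M H : ℝ} {v : ℝ → ℝ}
    (hv : IsEntireLocalMinJF α β (fun x => M * x) v) (hβ : 0 < β) (hM : M ≠ 0) (hH : 0 < H)
    (hα : α = 4 / 3 * (β * M ^ 2) * H ^ 3) (a : ℝ) :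
    ∃ x ∈ Ioo a (a + 10 * H), ¬ ContinuousAt v x := by
  by_contra! hno
  have hγ : 0 < β * M ^ 2 := by positivity
  have hab : a < a + 10 * H := by linarith
  obtain ⟨c, hc⟩ := (hv _ _ hab).1.const_of_no_jump hno
  have h1 := hv.energy_le hβ hM hH hα hab
  rw [JF_const' (H := 0) (y := c / M) hab fun x hx => by rw [hc x hx]; field_simp, hα] at h1
  set t := a - c / M + 5 * H with ht
  have e1 : a + 10 * H - c / M = t + 5 * H := by rw [ht]; ring
  have e2 : a - c / M = t - 5 * H := by rw [ht]; ring
  rw [e1, e2] at h1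
  have h2 : 0 ≤ β * M ^ 2 * (t ^ 2 * H) := by positivity
  have h3 : 0 < β * M ^ 2 * H ^ 3 := by positivity
  nlinarith

lemma IsEntireLocalMinJF.next {α β M H : ℝ} {v : ℝ → ℝ}
    (hv : IsEntireLocalMinJF α β (fun x => M * x) v) (hβ : 0 < β) (hM : M ≠ 0) (hH : 0 < H)
    (hα : α = 4 / 3 * (β * M ^ 2) * H ^ 3) {p : ℝ} (hp : ¬ ContinuousAt v p) :
    ∃ q, Consec v p q := by
  obtain ⟨x, hx, hxj⟩ := hv.exists_jump hβ hM hH hα p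
  have hf := (hv p (p + 10 * H) (by linarith)).1.finite_jumpSet
  obtain ⟨q, ⟨hq, hqj⟩, hmin⟩ := hf.exists_minimalFor id _ ⟨x, hx, hxj⟩
  refine ⟨q, hq.1, hp, hqj, fun y hy => ?_⟩
  by_contra hyj
  have := hmin (j := y) ⟨⟨hy.1, hy.2.trans hq.2⟩, hyj⟩ hy.2.le
  exact absurd hy.2 (not_lt.2 this)

lemma IsEntireLocalMinJF.prev {α β M H : ℝ} {v : ℝ → ℝ}
    (hv : IsEntireLocalMinJF α β (fun x => M * x) v) (hβ : 0 < β) (hM : M ≠ 0) (hH : 0 < H)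
    (hα : α = 4 / 3 * (β * M ^ 2) * H ^ 3) {q : ℝ} (hqj : ¬ ContinuousAt v q) :
    ∃ p, Consec v p q := by
  obtain ⟨x, hx, hxj⟩ := hv.exists_jump hβ hM hH hα (q - 10 * H)
  rw [sub_add_cancel] at hx
  have hf := (hv (q - 10 * H) q (by linarith)).1.finite_jumpSet
  obtain ⟨p, ⟨hp, hpj⟩, hmax⟩ := hf.exists_maximalFor id _ ⟨x, hx, hxj⟩
  refine ⟨p, hp.2, hpj, hqj, fun y hy => ?_⟩
  by_contra hyj
  have := hmax (j := y) ⟨⟨hp.1.trans hy.1, hy.2⟩, hyj⟩ hy.1.le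
  exact absurd hy.1 (not_lt.2 this)

/-- On each step the value is the mean of the forcing term. -/
lemma IsEntireLocalMinJF.value {α β M : ℝ} {v : ℝ → ℝ}
    (hv : IsEntireLocalMinJF α β (fun x => M * x) v) (hα : 0 < α) (hβ : 0 < β) {p q : ℝ}
    (h : Consec v p q) : ∀ x ∈ Ico p q, v x = M * ((p + q) / 2) := by
  obtain ⟨hpq, hp, hq, hj⟩ := h
  have hc := hv.const_Ico hpq hj
  have key := hv.paste_le hpq hα (isStep_const (p - 1) (q + 1) (M * ((p + q) / 2)))
  rw [jmp_of_not hp, jmp_of_not hq, JF_const hpq fun x hx => hc x ⟨hx.1.le, hx.2⟩,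
    JF_const hpq fun x _ => rfl] at key
  have h1 : 0 ≤ β * (q - p) * (v p - M * ((p + q) / 2)) ^ 2 :=
    mul_nonneg (mul_nonneg hβ.le (by linarith)) (sq_nonneg _)
  have h2 : β * (q - p) * (v p - M * ((p + q) / 2)) ^ 2 = 0 := by nlinarith
  have h3 : v p - M * ((p + q) / 2) = 0 := by
    have : β * (q - p) ≠ 0 := mul_ne_zero hβ.ne' (by linarith)
    exact pow_eq_zero_iff (two_ne_zero) |>.1 ((mul_eq_zero.1 h2).resolve_left this)
  intro x hx
  rw [hc x hx]
  linarith

lemma JF_mid {α β M p q : ℝ} {u : ℝ → ℝ} (hpq : p < q)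
    (h : ∀ x ∈ Ioo p q, u x = M * ((p + q) / 2)) :
    JF α β (fun x => M * x) p q u = β * M ^ 2 * (q - p) ^ 3 / 12 := by
  rw [JF_const hpq h]
  ring

/-- Consecutive steps have equal length: otherwise moving the middle jump to the midpoint and
adjusting the two values would lower the energy, by strict convexity of the cube. -/
lemma IsEntireLocalMinJF.equal {α β M : ℝ} {v : ℝ → ℝ}
    (hv : IsEntireLocalMinJF α β (fun x => M * x) v) (hα : 0 < α) (hβ : 0 < β) (hM : M ≠ 0)
    {p q r : ℝ} (h : Consec v p q) (h' : Consec v q r) : r - q = q - p := by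
  have hγ : 0 < β * M ^ 2 := by positivity
  have v1 := hv.value hα hβ h
  have v2 := hv.value hα hβ h'
  obtain ⟨hpq, hp, hq, -⟩ := h
  obtain ⟨hqr, -, hr, -⟩ := h'
  have hpr := hpq.trans hqr
  set m := (p + r) / 2 with hm
  have hpm : p < m := by rw [hm]; linarith
  have hmr : m < r := by rw [hm]; linarith
  set w : ℝ → ℝ := fun x => if x < m then M * ((p + m) / 2) else M * ((m + r) / 2) with hw
  have hws : ∀ a b, IsStep a b w := fun a b => (isStep_const a b _).glue (isStep_const a b _) m
  have key := hv.paste_le hpr hα (hws _ _)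
  rw [jmp_of_not hp, jmp_of_not hr, JF_split hpq hqr (hv p r hpr).1,
    JF_split hpm hmr (hws _ _), jmp_of_not hq,
    JF_mid hpq fun x hx => v1 x ⟨hx.1.le, hx.2⟩, JF_mid hqr fun x hx => v2 x ⟨hx.1.le, hx.2⟩,
    JF_mid (p := p) (q := m) hpm fun x hx => by simp [hw, hx.2],
    JF_mid (p := m) (q := r) hmr fun x hx => by simp [hw, hx.1.le]] at key
  have h1 := mul_le_mul_of_nonneg_left (jmp_le_one w m) hα.le
  have h2 : β * M ^ 2 * ((q - p) ^ 3 + (r - q) ^ 3)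
      ≤ β * M ^ 2 * ((m - p) ^ 3 + (r - m) ^ 3) := by linarith
  have h3 := le_of_mul_le_mul_left h2 hγ
  have e1 : m - p = (r - p) / 2 := by rw [hm]; ring
  have e2 : r - m = (r - p) / 2 := by rw [hm]; ring
  rw [e1, e2] at h3
  have h4 : (r - p) * ((r - q) - (q - p)) ^ 2 ≤ 0 := by nlinarith
  have h5 : ((r - q) - (q - p)) ^ 2 ≤ 0 := by
    by_contra! h5
    linarith [mul_pos (sub_pos.2 hpr) h5]
  have := pow_eq_zero_iff (two_ne_zero) |>.1 (le_antisymm h5 (sq_nonneg _))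
  linarith

lemma consec_all {v : ℝ → ℝ} {p d : ℝ} (h0 : Consec v p (p + d))
    (hn : ∀ p q, Consec v p q → Consec v q (q + (q - p)))
    (hp : ∀ p q, Consec v p q → Consec v (p - (q - p)) p) (k : ℤ) :
    Consec v (p + d * k) (p + d * (k + 1)) := by
  induction k using Int.induction_on with
  | zero => simpa using h0
  | succ k ih =>
    convert hn _ _ ih using 1 <;> push_cast <;> ring
  | pred k ih =>
    convert hp _ _ ih using 1 <;> push_cast <;> ring

/-- Every entire local minimizer is an optimal staircase. -/
lemma IsEntireLocalMinJF.eq_stair {α β M H : ℝ} {v : ℝ → ℝ}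
    (hv : IsEntireLocalMinJF α β (fun x => M * x) v) (hβ : 0 < β) (hM : M ≠ 0) (hH : 0 < H)
    (hα : α = 4 / 3 * (β * M ^ 2) * H ^ 3) : ∃ p, v = stair M p (2 * H) := by
  have hγ : 0 < β * M ^ 2 := by positivity
  have hα0 : 0 < α := by rw [hα]; positivity
  obtain ⟨p, -, hpj⟩ := hv.exists_jump hβ hM hH hα 0
  obtain ⟨q, hpq⟩ := hv.next hβ hM hH hα hpj
  set d := q - p with hd
  have hd0 : 0 < d := by linarith [hpq.1]
  have hall : ∀ k : ℤ, Consec v (p + d * k) (p + d * (k + 1)) := by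
    refine consec_all (by rwa [hd, add_sub_cancel]) ?_ ?_
    · intro p q h
      obtain ⟨r, hr⟩ := hv.next hβ hM hH hα h.2.2.1
      have := hv.equal hα0 hβ hM h hr
      rwa [show q + (q - p) = r by linarith]
    · intro p q h
      obtain ⟨r, hr⟩ := hv.prev hβ hM hH hα h.2.1
      have := hv.equal hα0 hβ hM hr h
      rwa [show p - (q - p) = r by linarith]
  have hval : ∀ x, v x = stair M p d x := by
    intro x
    have h1 := Int.floor_le ((x - p) / d)
    have h2 := Int.lt_floor_add_one ((x - p) / d)
    rw [le_div_iff₀ hd0] at h1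
    rw [div_lt_iff₀ hd0] at h2
    rw [hv.value hα0 hβ (hall ⌊(x - p) / d⌋) x ⟨by linarith, by linarith⟩, stair]
    ring
  have henergy : ∀ k : ℕ, JF α β (fun x => M * x) p (p + d * (k + 1)) v
      = α * k + β * M ^ 2 * d ^ 3 / 12 * (k + 1) := by
    intro k
    have hpiece : ∀ k : ℤ, JF α β (fun x => M * x) (p + d * k) (p + d * (k + 1)) v
        = β * M ^ 2 * d ^ 3 / 12 := by
      intro k
      rw [JF_mid (hall k).1 fun x hx => hv.value hα0 hβ (hall k) x ⟨hx.1.le, hx.2⟩]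
      ring
    induction k with
    | zero =>
      have := hpiece 0
      simp only [Int.cast_zero, mul_zero, add_zero] at this
      simp only [Nat.cast_zero, this]
      ring
    | succ k ih =>
      have h1 := hpiece (k + 1)
      have h2 := (hall (k + 1)).2.1
      push_cast at h1 h2 ⊢
      have hk : (0 : ℝ) ≤ k := Nat.cast_nonneg k
      rw [JF_split (p := p + d * (k + 1)) (by nlinarith) (by nlinarith)
        (hv _ _ (by nlinarith)).1, ih, h1, jmp_of_not h2]
      ring
  have hslope : α + β * M ^ 2 * d ^ 3 / 12 ≤ β * M ^ 2 * H ^ 2 * d := by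
    by_contra! hlt
    obtain ⟨k, hk⟩ := exists_nat_gt
      (4 * α / (α + β * M ^ 2 * d ^ 3 / 12 - β * M ^ 2 * H ^ 2 * d))
    rw [div_lt_iff₀ (by linarith)] at hk
    have h1 := hv.energy_le hβ hM hH hα (a := p) (b := p + d * (k + 1)) (by
      have : (0 : ℝ) ≤ k := Nat.cast_nonneg k
      nlinarith)
    rw [henergy] at h1
    nlinarith
  -- the cost per unit length is minimal only at step length `2H`
  have hdH : d = 2 * H := by
    rw [hα] at hslope
    have h1 : β * M ^ 2 * ((d - 2 * H) ^ 2 * (d + 4 * H)) ≤ β * M ^ 2 * 0 := by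
      linarith
    have h2 := le_of_mul_le_mul_left h1 hγ
    have h3 : (d - 2 * H) ^ 2 ≤ 0 := by
      by_contra! h3
      linarith [mul_pos h3 (show 0 < d + 4 * H by linarith)]
    have := pow_eq_zero_iff (two_ne_zero) |>.1 (le_antisymm h3 (sq_nonneg _))
    linarith
  exact ⟨p, by rw [← hdH]; exact funext hval⟩

/-- `Obl H (M * H)` consists of all staircases of step length `2H`. -/
lemma obl_iff {M H : ℝ} (hH : 0 < H) (v : ℝ → ℝ) :
    Obl H (M * H) v ↔ ∃ p, v = stair M p (2 * H) := by
  have conv : ∀ t x, canStair H (M * H) (x - H * t) + M * H * t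
      = stair M (H * t - H) (2 * H) x := by
    intro t x
    have : ((x - H * t) / H + 1) / 2 = (x - (H * t - H)) / (2 * H) := by field_simp; ring
    rw [canStair, stairS, stair, this]
    ring
  constructor
  · rintro ⟨t, _, h⟩
    exact ⟨H * t - H, funext fun x => by rw [h x, conv]⟩
  · rintro ⟨p, rfl⟩
    -- shift `p` by a multiple of `2H` into `[-2H, 0)`
    set n : ℤ := ⌊p / (2 * H)⌋ with hn
    have h1 := Int.floor_le (p / (2 * H))
    have h2 := Int.lt_floor_add_one (p / (2 * H))
    refine ⟨2 * (p / (2 * H) - n) - 1, ⟨by linarith, by linarith⟩, fun x => ?_⟩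
    rw [conv]
    have e : H * (2 * (p / (2 * H) - n) - 1) - H = p - 2 * H * (n + 1) := by field_simp; ring
    have e2 : (x - (p - 2 * H * (n + 1))) / (2 * H) = (x - p) / (2 * H) + ((n + 1 : ℤ) : ℝ) := by
      push_cast; field_simp; ring
    rw [e, stair, stair, e2, Int.floor_add_intCast]
    push_cast
    ring

/-! ### The case of zero forcing -/

lemma zero_of_long {α β : ℝ} {v : ℝ → ℝ} (hβ : 0 < β) {c : ℝ}
    (hbd : ∀ a b, a < b → JF α β (fun x => (0 : ℝ) * x) a b v ≤ 2 * α)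
    (h : ∀ L : ℝ, ∃ a b, L < b - a ∧ a < b ∧ ∀ x ∈ Ioo a b, v x = c) : c = 0 := by
  by_contra hc
  have hc2 : 0 < β * c ^ 2 := by positivity
  obtain ⟨a, b, hL, hab, hv⟩ := h (2 * α / (β * c ^ 2))
  have := hbd a b hab
  rw [JF_const hab hv] at this
  rw [div_lt_iff₀ hc2] at hL
  nlinarith

lemma min_zero {α β : ℝ} (hα : 0 < α) (hβ : 0 < β) (v : ℝ → ℝ) :
    IsEntireLocalMinJF α β (fun x => (0 : ℝ) * x) v ↔ ∀ x, v x = 0 := by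
  constructor
  · intro hv
    have hbd : ∀ a b, a < b → JF α β (fun x => (0 : ℝ) * x) a b v ≤ 2 * α := by
      intro a b hab
      have := hv.paste_le hab hα (isStep_const (a - 1) (b + 1) 0)
      rw [JF_const (u := fun _ => 0) hab fun x _ => rfl] at this
      nlinarith [jmp_nonneg v a, jmp_nonneg v b]
    have hfin : {x | ¬ ContinuousAt v x}.Finite := by
      by_contra hinf
      obtain ⟨t, ht, hcard⟩ := Set.Infinite.exists_subset_card_eq hinf 3
      obtain ⟨R, hR⟩ := t.finite_toSet.isBounded.subset_ball 0
      have hsub : (t : Set ℝ) ⊆ jumpSet (-|R| - 1) (|R| + 1) v := by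
        intro x hx
        refine ⟨?_, ht hx⟩
        have h1 := hR hx
        rw [mem_ball_zero_iff, Real.norm_eq_abs, abs_lt] at h1
        have := le_abs_self R
        exact ⟨by linarith, by linarith⟩
      have hlt : -|R| - 1 < |R| + 1 := by linarith [abs_nonneg R]
      have h1 := Set.ncard_le_ncard hsub (hv _ _ hlt).1.finite_jumpSet
      rw [Set.ncard_coe_finset, hcard] at h1
      have h2 := hbd _ _ hlt
      have h3 := ncard_le_JF (α := α) hβ (fun x => (0 : ℝ) * x) (-|R| - 1) (|R| + 1) v
      have h4 : (3 : ℝ) ≤ ((jumpSet (-|R| - 1) (|R| + 1) v).ncard : ℝ) := by exact_mod_cast h1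
      nlinarith
    obtain ⟨R0, hR0⟩ := hfin.isBounded.subset_ball 0
    set R := |R0| + 1 with hRdef
    have hRpos : 0 < R := by positivity
    have hcont : ∀ x, R ≤ |x| → ContinuousAt v x := by
      intro x hx
      by_contra hc
      have h1 := hR0 hc
      rw [mem_ball_zero_iff, Real.norm_eq_abs] at h1
      linarith [le_abs_self R0]
    have hright : ∀ x, R ≤ x → v x = 0 := by
      have hc : ∀ x, R ≤ x → v x = v R := by
        intro x hx
        refine hv.const_Ico (p := R) (q := x + 1) (by linarith) (fun y hy => hcont y ?_) x
          ⟨hx, by linarith⟩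
        exact hy.1.le.trans (le_abs_self y)
      have : v R = 0 := by
        refine zero_of_long (α := α) (v := v) hβ hbd fun L => ⟨R, R + |L| + 1, ?_, ?_, ?_⟩
        · linarith [le_abs_self L]
        · linarith [abs_nonneg L]
        · exact fun x hx => hc x hx.1.le
      intro x hx
      rw [hc x hx, this]
    have hleft : ∀ x, x < -R → v x = 0 := by
      have hc : ∀ x y, x < y → y < -R → v y = v x := by
        intro x y hxy hy
        refine hv.const_Ico (p := x) (q := -R) (by linarith) (fun z hz => hcont z ?_) y
          ⟨hxy.le, hy⟩
        linarith [neg_le_abs z, hz.2]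
      intro x hx
      refine zero_of_long (α := α) (v := v) hβ hbd fun L => ⟨x - |L| - 1, x, ?_, ?_, ?_⟩
      · linarith [le_abs_self L]
      · linarith [abs_nonneg L]
      · exact fun y hy => (hc y x hy.2 hx).symm
    -- `v` vanishes near both ends of `(-R-1, R+1)`, so `0` is an admissible competitor there
    have hlt : -R - 1 < R + 1 := by linarith
    obtain ⟨hs, hm⟩ := hv (-R - 1) (R + 1) hlt
    have hle := hm (fun _ => 0) (isStep_const _ _ 0) (by
      constructor
      · intro c hc
        refine hc.congr' ?_
        filter_upwards [mem_nhdsWithin_of_mem_nhds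
          (Iio_mem_nhds (show -R - 1 < -R by linarith))] with x hx using hleft x hx
      · intro c hc
        refine hc.congr' ?_
        filter_upwards [mem_nhdsWithin_of_mem_nhds
          (Ioi_mem_nhds (show R < R + 1 by linarith))] with x hx using hright x (le_of_lt hx))
    rw [JF_const (u := fun _ => 0) hlt fun x _ => rfl] at hle
    have h3 := ncard_le_JF (α := α) hβ (fun x => (0 : ℝ) * x) (-R - 1) (R + 1) v
    have h4 : ((jumpSet (-R - 1) (R + 1) v).ncard : ℝ) ≤ 0 := by
      by_contra! h
      have := mul_pos hα h
      linarith
    have h5 : (jumpSet (-R - 1) (R + 1) v).ncard = 0 := by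
      have : (jumpSet (-R - 1) (R + 1) v).ncard ≤ 0 := by exact_mod_cast h4
      omega
    rw [Set.ncard_eq_zero hs.finite_jumpSet] at h5
    obtain ⟨c, hc⟩ := hs.const_of_no_jump (by
      intro x hx
      by_contra hxc
      have : x ∈ jumpSet (-R - 1) (R + 1) v := ⟨hx, hxc⟩
      rw [h5] at this
      exact this)
    have hc0 : c = 0 := by
      rw [← hc R ⟨by linarith, by linarith⟩, hright R le_rfl]
    intro x
    rcases lt_or_ge x (-R) with h | h
    · exact hleft x h
    · rcases lt_or_ge x R with h' | h'
      · rw [hc x ⟨by linarith, by linarith⟩, hc0]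
      · exact hright x h'
  · intro hv a b hab
    refine ⟨(isStep_const a b 0).congr fun x _ => hv x, fun u _ _ => ?_⟩
    rw [JF_const hab fun x _ => hv x]
    have := ncard_le_JF (α := α) hβ (fun x => (0 : ℝ) * x) a b u
    have : 0 ≤ α * ((jumpSet a b u).ncard : ℝ) := by positivity
    linarith

/-- Characterization of entire local minimizers of `JF(α,β,Mx,·,·)`:
they are exactly the oblique translations of the canonical `(H,V)`-staircase with
`H = (1/2)(6α/(βM²))^{1/3}` and `V = MH` (the zero function when `M = 0`). -/
theorem entire_local_minimizers_characterization
    (α β M : ℝ) (hα : 0 < α) (hβ : 0 < β) :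
    ∀ v : ℝ → ℝ,
      IsEntireLocalMinJF α β (fun x => M * x) v ↔
        Obl ((1 / 2) * (6 * α / (β * M ^ 2)) ^ ((1 : ℝ) / 3))
          (M * ((1 / 2) * (6 * α / (β * M ^ 2)) ^ ((1 : ℝ) / 3))) v := by
  intro v
  rcases eq_or_ne M 0 with rfl | hM
  · rw [min_zero hα hβ]
    -- here `6α/(β·0²) = 0`, so both `H` and `V` vanish
    simp only [Obl, canStair]
    constructor
    · exact fun h => ⟨0, by norm_num, fun x => by simp [h x]⟩
    · rintro ⟨t, _, h⟩ x
      simp [h x]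
  · set H := (1 / 2) * (6 * α / (β * M ^ 2)) ^ ((1 : ℝ) / 3) with hHdef
    have hpos : 0 < 6 * α / (β * M ^ 2) := by positivity
    have hH : 0 < H := by positivity
    have hcube : H ^ 3 = 1 / 8 * (6 * α / (β * M ^ 2)) := by
      rw [hHdef, mul_pow, ← Real.rpow_natCast (_ ^ ((1 : ℝ) / 3)), ← Real.rpow_mul hpos.le]
      norm_num
    have hαH : α = 4 / 3 * (β * M ^ 2) * H ^ 3 := by
      rw [hcube]
      field_simp
      norm_num
    rw [obl_iff hH]
    constructor
    · exact fun hv => hv.eq_stair hβ hM hH hαH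
    · rintro ⟨p, rfl⟩
      exact stair_isMin hβ hM hH hαH

end PeronaMalik
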